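/- arXiv:1901.09295 — 10 statements merged into one kernel-verified Lean document; each statement's English description precedes it below -/
import Mathlib

section
/- Let a < b and c < d be real numbers, let r : ℝ² → ℝ³ be twice continuously differentiable on an open neighborhood of [a,b] × [c,d], and let G : ℝ² → ℝ³ be continuously differentiable on that neighborhood. Then ∮_{∂([a,b]×[c,d])} (G · r_u) du + (G · r_v) dv = ∬_{[a,b]×[c,d]} (G_u · r_v − G_v · r_u) du dv. -/
open Real Set

noncomputable def dot3 (a b : Fin 3 → ℝ) : ℝ := a 0 * b 0 + a 1 * b 1 + a 2 * b 2

noncomputable def cross3 (a b : Fin 3 → ℝ) : Fin 3 → ℝ :=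
  ![a 1 * b 2 - a 2 * b 1, a 2 * b 0 - a 0 * b 2, a 0 * b 1 - a 1 * b 0]

noncomputable def pdu {E : Type*} [NormedAddCommGroup E] [NormedSpace ℝ E]
    (f : ℝ × ℝ → E) (p : ℝ × ℝ) : E := fderiv ℝ f p (1, 0)

noncomputable def pdv {E : Type*} [NormedAddCommGroup E] [NormedSpace ℝ E]
    (f : ℝ × ℝ → E) (p : ℝ × ℝ) : E := fderiv ℝ f p (0, 1)

noncomputable def curl3 (F : (Fin 3 → ℝ) → (Fin 3 → ℝ)) (q : Fin 3 → ℝ) : Fin 3 → ℝ :=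
  ![fderiv ℝ F q (Pi.single 1 1) 2 - fderiv ℝ F q (Pi.single 2 1) 1,
    fderiv ℝ F q (Pi.single 2 1) 0 - fderiv ℝ F q (Pi.single 0 1) 2,
    fderiv ℝ F q (Pi.single 0 1) 1 - fderiv ℝ F q (Pi.single 1 1) 0]

noncomputable def lineInt (P Q : ℝ × ℝ → ℝ) (a b c d : ℝ) : ℝ :=
  (∫ u in a..b, P (u, c)) + (∫ v in c..d, Q (b, v))
    - (∫ u in a..b, P (u, d)) - (∫ v in c..d, Q (a, v))

noncomputable def mob (p : ℝ × ℝ) : Fin 3 → ℝ :=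
  ![(1 + p.2 * Real.cos (p.1 / 2)) * Real.cos p.1,
    (1 + p.2 * Real.cos (p.1 / 2)) * Real.sin p.1,
    p.2 * Real.sin (p.1 / 2)]

noncomputable def rhat (δ : ℝ) (p : ℝ × ℝ) : Fin 3 → ℝ :=
  (1 - p.2) • mob (p.1, δ) + p.2 • mob (2 * π - p.1, δ)

theorem aux_dot_contDiffOn {U : Set (ℝ × ℝ)} {G H : ℝ × ℝ → Fin 3 → ℝ}
    (hG : ContDiffOn ℝ 1 G U) (hH : ContDiffOn ℝ 1 H U) :
    ContDiffOn ℝ 1 (fun p => dot3 (G p) (H p)) U := by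
  rw [contDiffOn_pi] at hG hH
  unfold dot3
  exact (((hG 0).mul (hH 0)).add ((hG 1).mul (hH 1))).add ((hG 2).mul (hH 2))

theorem aux_dot_fderiv {x : ℝ × ℝ} {G H : ℝ × ℝ → Fin 3 → ℝ}
    (hG : DifferentiableAt ℝ G x) (hH : DifferentiableAt ℝ H x) (w : ℝ × ℝ) :
    fderiv ℝ (fun p => dot3 (G p) (H p)) x w
      = dot3 (fderiv ℝ G x w) (H x) + dot3 (G x) (fderiv ℝ H x w) := by
  have hg := hasFDerivAt_pi'.1 hG.hasFDerivAt
  have hh := hasFDerivAt_pi'.1 hH.hasFDerivAt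
  have := ((((hg 0).mul (hh 0)).add ((hg 1).mul (hh 1))).add ((hg 2).mul (hh 2)))
  have e : fderiv ℝ (fun p => dot3 (G p) (H p)) x = _ := this.fderiv
  rw [e]
  simp [dot3]
  ring

theorem stmt1 (a b c d : ℝ) (hab : a < b) (hcd : c < d)
    (U : Set (ℝ × ℝ)) (hU : IsOpen U) (hDU : (Set.Icc a b) ×ˢ (Set.Icc c d) ⊆ U)
    (r G : ℝ × ℝ → Fin 3 → ℝ)
    (hr : ContDiffOn ℝ 2 r U) (hG : ContDiffOn ℝ 1 G U) :
    lineInt (fun p => dot3 (G p) (pdu r p)) (fun p => dot3 (G p) (pdv r p)) a b c d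
      = ∫ p in (Set.Icc a b) ×ˢ (Set.Icc c d),
          (dot3 (pdu G p) (pdv r p) - dot3 (pdv G p) (pdu r p)) := by
  set R := (Set.Icc a b) ×ˢ (Set.Icc c d) with hR
  have hRI : Set.Icc (a, c) (b, d) = R := by rw [hR, Set.Icc_prod_Icc]
  have hdr : ContDiffOn ℝ 1 (fderiv ℝ r) U := hr.fderiv_of_isOpen hU (by norm_num)
  have hu : ContDiffOn ℝ 1 (pdu r) U := hdr.clm_apply contDiffOn_const
  have hv : ContDiffOn ℝ 1 (pdv r) U := hdr.clm_apply contDiffOn_const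
  have hf := aux_dot_contDiffOn hG hv
  have hg := (aux_dot_contDiffOn hG hu).neg
  have key : ∀ x ∈ U, fderiv ℝ (fun p => dot3 (G p) (pdv r p)) x (1, 0)
      + fderiv ℝ (fun p => -dot3 (G p) (pdu r p)) x (0, 1)
      = dot3 (pdu G x) (pdv r x) - dot3 (pdv G x) (pdu r x) := by
    intro x hx
    have hn := hU.mem_nhds hx
    have dG := (hG.contDiffAt hn).differentiableAt (by norm_num)
    have du := (hu.contDiffAt hn).differentiableAt (by norm_num)
    have dv := (hv.contDiffAt hn).differentiableAt (by norm_num)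
    have dr := (hdr.contDiffAt hn).differentiableAt (by norm_num)
    have e1 := aux_dot_fderiv dG dv (1, 0)
    have e2 := aux_dot_fderiv dG du (0, 1)
    have sym : fderiv ℝ (pdv r) x (1, 0) = fderiv ℝ (pdu r) x (0, 1) := by
      have s := (hr.contDiffAt hn).isSymmSndFDerivAt (by simp)
      have h1 : fderiv ℝ (pdv r) x (1, 0) = fderiv ℝ (fderiv ℝ r) x (1, 0) (0, 1) := by
        have : HasFDerivAt (pdv r) _ x := dr.hasFDerivAt.clm_apply (hasFDerivAt_const (0, 1) x)
        rw [this.fderiv]; simp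
      have h2 : fderiv ℝ (pdu r) x (0, 1) = fderiv ℝ (fderiv ℝ r) x (0, 1) (1, 0) := by
        have : HasFDerivAt (pdu r) _ x := dr.hasFDerivAt.clm_apply (hasFDerivAt_const (1, 0) x)
        rw [this.fderiv]; simp
      rw [h1, h2]; exact s _ _
    have e3 : fderiv ℝ (fun p => -dot3 (G p) (pdu r p)) x
        = -fderiv ℝ (fun p => dot3 (G p) (pdu r p)) x := fderiv_fun_neg
    rw [e3, e1, ContinuousLinearMap.neg_apply, e2, sym]
    simp only [pdu, pdv]
    ring
  have cf : ContinuousOn (fderiv ℝ (fun p => dot3 (G p) (pdv r p))) U :=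
    hf.continuousOn_fderiv_of_isOpen hU (by norm_num)
  have cg : ContinuousOn (fderiv ℝ (fun p => -dot3 (G p) (pdu r p))) U :=
    hg.continuousOn_fderiv_of_isOpen hU (by norm_num)
  have hsub : Set.Ioo a b ×ˢ Set.Ioo c d ⊆ U :=
    (Set.prod_mono Set.Ioo_subset_Icc_self Set.Ioo_subset_Icc_self).trans hDU
  have main := MeasureTheory.integral_divergence_prod_Icc_of_hasFDerivAt_of_le
    (fun p => dot3 (G p) (pdv r p)) (fun p => -dot3 (G p) (pdu r p))
    (fderiv ℝ (fun p => dot3 (G p) (pdv r p))) (fderiv ℝ (fun p => -dot3 (G p) (pdu r p)))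
    (a, c) (b, d) ⟨hab.le, hcd.le⟩
    (hRI ▸ hf.continuousOn.mono hDU) (hRI ▸ hg.continuousOn.mono hDU)
    (fun x hx => ((hf.contDiffAt (hU.mem_nhds (hsub hx))).differentiableAt
      (by norm_num)).hasFDerivAt)
    (fun x hx => ((hg.contDiffAt (hU.mem_nhds (hsub hx))).differentiableAt
      (by norm_num)).hasFDerivAt)
    (ContinuousOn.integrableOn_compact isCompact_Icc (by
      rw [hRI]
      exact ((cf.clm_apply continuousOn_const).add
        (cg.clm_apply continuousOn_const)).mono hDU))
  rw [hRI, MeasureTheory.setIntegral_congr_fun (measurableSet_Icc.prod measurableSet_Icc)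
    (fun x hx => key x (hDU hx))] at main
  rw [main]
  simp only [lineInt, intervalIntegral.integral_neg]
  ring
end

section
/- Let r : ℝ² → ℝ³ be differentiable at a point p = (u,v), let F : ℝ³ → ℝ³ be differentiable at r(p), and set G = F ∘ r. Then (∇ × F)(r(p)) · (r_u(p) × r_v(p)) = G_u(p) · r_v(p) − G_v(p) · r_u(p), where × is the cross product in ℝ³ and · the Euclidean inner product. -/
open Real Set

theorem stmt2 (r : ℝ × ℝ → Fin 3 → ℝ) (F : (Fin 3 → ℝ) → (Fin 3 → ℝ))
    (p : ℝ × ℝ) (hr : DifferentiableAt ℝ r p) (hF : DifferentiableAt ℝ F (r p))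
    (G : ℝ × ℝ → Fin 3 → ℝ) (hG : G = F ∘ r) :
    dot3 (curl3 F (r p)) (cross3 (pdu r p) (pdv r p))
      = dot3 (pdu G p) (pdv r p) - dot3 (pdv G p) (pdu r p) := by
  subst hG
  have key : ∀ (L : (Fin 3 → ℝ) →L[ℝ] (Fin 3 → ℝ)) (w : Fin 3 → ℝ) (i : Fin 3),
      L w i = w 0 * L (Pi.single 0 1) i + w 1 * L (Pi.single 1 1) i
        + w 2 * L (Pi.single 2 1) i := by
    intro L w i
    have hw : w = w 0 • (Pi.single 0 1 : Fin 3 → ℝ) + w 1 • (Pi.single 1 1 : Fin 3 → ℝ)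
        + w 2 • (Pi.single 2 1 : Fin 3 → ℝ) := by
      ext j
      fin_cases j <;> simp
    conv_lhs => rw [hw]
    simp only [map_add, map_smul, Pi.add_apply, Pi.smul_apply, smul_eq_mul]
  have hc : fderiv ℝ (F ∘ r) p = (fderiv ℝ F (r p)).comp (fderiv ℝ r p) :=
    fderiv_comp p hF hr
  unfold pdu pdv
  rw [hc]
  simp only [ContinuousLinearMap.comp_apply]
  generalize fderiv ℝ r p (1, 0) = a
  generalize fderiv ℝ r p (0, 1) = b
  unfold dot3 curl3 cross3
  generalize fderiv ℝ F (r p) = L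
  rw [key L a 0, key L a 1, key L a 2, key L b 0, key L b 1, key L b 2]
  simp only [Matrix.cons_val]
  ring
end

section
/- Let a < b and c < d be real numbers, let r : ℝ² → ℝ³ be twice continuously differentiable on an open neighborhood of the rectangle [a,b] × [c,d], and let F : ℝ³ → ℝ³ be continuously differentiable on an open neighborhood of the image r([a,b] × [c,d]). Set G = F ∘ r. Then ∮_{∂([a,b]×[c,d])} (G · r_u) du + (G · r_v) dv = ∬_{[a,b]×[c,d]} (∇ × F)(r(u,v)) · (r_u(u,v) × r_v(u,v)) du dv. -/
open Real Set

lemma aux_fderiv (r : ℝ × ℝ → Fin 3 → ℝ) (F : (Fin 3 → ℝ) → (Fin 3 → ℝ)) (p w e : ℝ × ℝ)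
    (hr : DifferentiableAt ℝ r p) (hr2 : DifferentiableAt ℝ (fderiv ℝ r) p)
    (hF : DifferentiableAt ℝ F (r p)) :
    fderiv ℝ (fun p => dot3 (F (r p)) (fderiv ℝ r p w)) p e
      = dot3 (fderiv ℝ F (r p) (fderiv ℝ r p e)) (fderiv ℝ r p w)
        + dot3 (F (r p)) (fderiv ℝ (fderiv ℝ r) p e w) := by
  have h1 : HasFDerivAt (fun p => F (r p)) ((fderiv ℝ F (r p)).comp (fderiv ℝ r p)) p :=
    hF.hasFDerivAt.comp p hr.hasFDerivAt
  have h2 : HasFDerivAt (fun p => fderiv ℝ r p w) ((fderiv ℝ (fderiv ℝ r) p).flip w) p := by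
    have := hr2.hasFDerivAt.clm_apply (hasFDerivAt_const w p)
    simpa using this
  have a1 := hasFDerivAt_pi'.1 h1
  have a2 := hasFDerivAt_pi'.1 h2
  have h3 := (((a1 0).mul (a2 0)).add ((a1 1).mul (a2 1))).add ((a1 2).mul (a2 2))
  have h4 : HasFDerivAt (fun p => dot3 (F (r p)) (fderiv ℝ r p w)) _ p := h3
  rw [h4.fderiv]
  simp [dot3]
  ring

lemma aux_alg (L : (Fin 3 → ℝ) →L[ℝ] (Fin 3 → ℝ)) (x y : Fin 3 → ℝ) :
    dot3 (L x) y - dot3 (L y) x =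
    dot3 ![L (Pi.single 1 1) 2 - L (Pi.single 2 1) 1,
      L (Pi.single 2 1) 0 - L (Pi.single 0 1) 2,
      L (Pi.single 0 1) 1 - L (Pi.single 1 1) 0] (cross3 x y) := by
  have h : ∀ z : Fin 3 → ℝ, L z = z 0 • L (Pi.single 0 1) + z 1 • L (Pi.single 1 1)
      + z 2 • L (Pi.single 2 1) := by
    intro z
    rw [← map_smul, ← map_smul, ← map_smul, ← map_add, ← map_add]
    congr 1
    ext i; fin_cases i <;> simp
  rw [h x, h y]
  simp [dot3, cross3]
  ring

theorem stmt3 (a b c d : ℝ) (hab : a < b) (hcd : c < d)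
    (U : Set (ℝ × ℝ)) (hU : IsOpen U) (hDU : (Set.Icc a b) ×ˢ (Set.Icc c d) ⊆ U)
    (r : ℝ × ℝ → Fin 3 → ℝ) (hr : ContDiffOn ℝ 2 r U)
    (V : Set (Fin 3 → ℝ)) (hV : IsOpen V)
    (hSV : r '' ((Set.Icc a b) ×ˢ (Set.Icc c d)) ⊆ V)
    (F : (Fin 3 → ℝ) → (Fin 3 → ℝ)) (hF : ContDiffOn ℝ 1 F V)
    (G : ℝ × ℝ → Fin 3 → ℝ) (hG : G = F ∘ r) :
    lineInt (fun p => dot3 (G p) (pdu r p)) (fun p => dot3 (G p) (pdv r p)) a b c d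
      = ∫ p in (Set.Icc a b) ×ˢ (Set.Icc c d),
          dot3 (curl3 F (r p)) (cross3 (pdu r p) (pdv r p)) := by
  subst hG
  set D := (Set.Icc a b) ×ˢ (Set.Icc c d) with hD
  have hWo : IsOpen (U ∩ r ⁻¹' V) := hr.continuousOn.isOpen_inter_preimage hU hV
  set W := U ∩ r ⁻¹' V with hW
  have hDW : D ⊆ W := fun p hp => ⟨hDU hp, hSV ⟨p, hp, rfl⟩⟩
  have hrd : ContDiffOn ℝ 1 (fderiv ℝ r) U := hr.fderiv_of_isOpen hU (by norm_num)
  have hC : ∀ w : ℝ × ℝ, ContDiffOn ℝ 1 (fun p => dot3 (F (r p)) (fderiv ℝ r p w)) W := by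
    intro w
    have h1 : ContDiffOn ℝ 1 (fun p => F (r p)) W :=
      hF.comp ((hr.of_le (by norm_num)).mono inter_subset_left) (fun p hp => hp.2)
    have h2 : ContDiffOn ℝ 1 (fun p => fderiv ℝ r p w) W :=
      (hrd.mono inter_subset_left).clm_apply contDiffOn_const
    rw [contDiffOn_pi] at h1 h2
    exact (((h1 0).mul (h2 0)).add ((h1 1).mul (h2 1))).add ((h1 2).mul (h2 2))
  set P : ℝ × ℝ → ℝ := fun p => dot3 (F (r p)) (fderiv ℝ r p (1, 0)) with hP
  set Q : ℝ × ℝ → ℝ := fun p => dot3 (F (r p)) (fderiv ℝ r p (0, 1)) with hQ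
  have hPC : ContDiffOn ℝ 1 P W := hC _
  have hQC : ContDiffOn ℝ 1 Q W := hC _
  have hPd : ∀ p ∈ W, DifferentiableAt ℝ P p := fun p hp =>
    (hPC.differentiableOn (by norm_num)).differentiableAt (hWo.mem_nhds hp)
  have hQd : ∀ p ∈ W, DifferentiableAt ℝ Q p := fun p hp =>
    (hQC.differentiableOn (by norm_num)).differentiableAt (hWo.mem_nhds hp)
  have hIcc : Set.Icc (a, c) (b, d) = D := by rw [hD, Icc_prod_Icc]
  have hcont : ContinuousOn (fun p => fderiv ℝ Q p (1, 0) + (-fderiv ℝ P p) (0, 1)) D := by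
    have h1 := (hPC.continuousOn_fderiv_of_isOpen hWo le_rfl).mono hDW
    have h2 := (hQC.continuousOn_fderiv_of_isOpen hWo le_rfl).mono hDW
    exact (h2.clm_apply continuousOn_const).add (h1.neg.clm_apply continuousOn_const)
  have hsub : ∀ x ∈ Ioo a b ×ˢ Ioo c d, x ∈ W := fun x hx =>
    hDW ⟨Ioo_subset_Icc_self hx.1, Ioo_subset_Icc_self hx.2⟩
  have key := MeasureTheory.integral_divergence_prod_Icc_of_hasFDerivAt_of_le Q (fun p => - P p)
    (fderiv ℝ Q) (fun p => - fderiv ℝ P p) (a, c) (b, d) ⟨hab.le, hcd.le⟩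
    (by rw [hIcc]; exact hQC.continuousOn.mono hDW)
    (by rw [hIcc]; exact (hPC.continuousOn.mono hDW).neg)
    (fun x hx => (hQd x (hsub x hx)).hasFDerivAt)
    (fun x hx => (hPd x (hsub x hx)).hasFDerivAt.neg)
    (by rw [hIcc]; exact hcont.integrableOn_compact (isCompact_Icc.prod isCompact_Icc))
  rw [hIcc] at key
  have hR : ∫ p in D, dot3 (curl3 F (r p)) (cross3 (pdu r p) (pdv r p))
      = ∫ p in D, (fderiv ℝ Q p (1, 0) + (-fderiv ℝ P p) (0, 1)) := by
    refine MeasureTheory.setIntegral_congr_fun (measurableSet_Icc.prod measurableSet_Icc) ?_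
    intro p hp
    have hpW := hDW hp
    have e0 : ContDiffAt ℝ 2 r p := hr.contDiffAt (hU.mem_nhds hpW.1)
    have e1 : DifferentiableAt ℝ r p := e0.differentiableAt (by norm_num)
    have e2 : DifferentiableAt ℝ (fderiv ℝ r) p :=
      (hrd.differentiableOn (by norm_num)).differentiableAt (hU.mem_nhds hpW.1)
    have e3 : DifferentiableAt ℝ F (r p) :=
      (hF.differentiableOn (by norm_num)).differentiableAt (hV.mem_nhds hpW.2)
    have hs : fderiv ℝ (fderiv ℝ r) p (1, 0) (0, 1) = fderiv ℝ (fderiv ℝ r) p (0, 1) (1, 0) :=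
      (e0.isSymmSndFDerivAt (by simp)) _ _
    have q1 := aux_fderiv r F p (0, 1) (1, 0) e1 e2 e3
    have q2 := aux_fderiv r F p (1, 0) (0, 1) e1 e2 e3
    have q3 := aux_alg (fderiv ℝ F (r p)) (pdu r p) (pdv r p)
    show dot3 (curl3 F (r p)) (cross3 (pdu r p) (pdv r p))
      = fderiv ℝ Q p (1, 0) + -(fderiv ℝ P p (0, 1))
    rw [hP, hQ, q1, q2, hs]
    unfold curl3
    rw [← q3]
    unfold pdu pdv
    ring
  rw [hR, key]
  simp only [intervalIntegral.integral_neg]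
  show (∫ u in a..b, P (u, c)) + (∫ v in c..d, Q (b, v))
    - (∫ u in a..b, P (u, d)) - (∫ v in c..d, Q (a, v)) = _
  ring
end

section
/- For every real u with cos u ≠ 0, r(u, −2·cos(u/2)/cos u) = r(u+π, −2·sin(u/2)/cos u) = (−1, −tan u, −tan u). Moreover, if δ > 2 then there exists ε > 0 such that for all u with 0 < u < ε, the two parameter points (u, −2·cos(u/2)/cos u) and (u+π, −2·sin(u/2)/cos u) are distinct points of D_δ. -/
open Real Set

theorem stmt5 :
    (∀ u : ℝ, Real.cos u ≠ 0 →
      mob (u, -2 * Real.cos (u / 2) / Real.cos u)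
          = mob (u + π, -2 * Real.sin (u / 2) / Real.cos u) ∧
      mob (u, -2 * Real.cos (u / 2) / Real.cos u) = ![-1, -Real.tan u, -Real.tan u]) ∧
    ∀ δ : ℝ, 2 < δ → ∃ ε > (0 : ℝ), ∀ u : ℝ, 0 < u → u < ε →
      (u, -2 * Real.cos (u / 2) / Real.cos u)
        ∈ (Set.Icc (0 : ℝ) (2 * π)) ×ˢ (Set.Icc (-δ) δ) ∧
      (u + π, -2 * Real.sin (u / 2) / Real.cos u)
        ∈ (Set.Icc (0 : ℝ) (2 * π)) ×ˢ (Set.Icc (-δ) δ) ∧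
      (u, -2 * Real.cos (u / 2) / Real.cos u)
        ≠ (u + π, -2 * Real.sin (u / 2) / Real.cos u) := by
  have key : ∀ u : ℝ, Real.cos u ≠ 0 →
      mob (u, -2 * Real.cos (u / 2) / Real.cos u) = ![-1, -Real.tan u, -Real.tan u] ∧
      mob (u + π, -2 * Real.sin (u / 2) / Real.cos u) = ![-1, -Real.tan u, -Real.tan u] := by
    intro u hu
    have h2 : Real.cos u = 2 * Real.cos (u / 2) ^ 2 - 1 := by
      rw [← Real.cos_two_mul]; congr 1; ring
    have hs : Real.sin u = 2 * Real.sin (u / 2) * Real.cos (u / 2) := by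
      rw [← Real.sin_two_mul]; congr 1; ring
    have h1 := Real.sin_sq_add_cos_sq (u / 2)
    have e1 : 1 + -2 * Real.cos (u / 2) / Real.cos u * Real.cos (u / 2) = -1 / Real.cos u := by
      field_simp
      linarith
    have e2 : 1 + -2 * Real.sin (u / 2) / Real.cos u * -Real.sin (u / 2) = 1 / Real.cos u := by
      field_simp
      linarith
    have hp : (u + π) / 2 = u / 2 + π / 2 := by ring
    constructor
    · simp only [mob]
      rw [e1, Real.tan_eq_sin_div_cos]
      congr 1
      · field_simp
      congr 1
      · field_simp
      congr 1
      · rw [hs]; field_simp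
    · simp only [mob]
      rw [hp, Real.cos_add_pi_div_two, Real.sin_add_pi_div_two, Real.cos_add_pi, Real.sin_add_pi,
        e2, Real.tan_eq_sin_div_cos]
      congr 1
      · field_simp
      congr 1
      · field_simp
      congr 1
      · rw [hs]; field_simp
  refine ⟨fun u hu => ⟨(key u hu).1.trans (key u hu).2.symm, (key u hu).1⟩, ?_⟩
  intro δ hδ
  have hev : ∀ᶠ u in nhds (0 : ℝ), 2 / δ < Real.cos u := by
    apply Real.continuous_cos.continuousAt.eventually_const_lt
    rw [Real.cos_zero, div_lt_one (by linarith)]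
    exact hδ
  obtain ⟨ε, hε, h⟩ := Metric.eventually_nhds_iff.1 hev
  refine ⟨min ε 1, lt_min hε one_pos, ?_⟩
  intro u hu0 hu
  have hpi := Real.pi_gt_three
  have hu1 : u < 1 := hu.trans_le (min_le_right _ _)
  have hc : 2 / δ < Real.cos u := by
    apply h
    rw [Real.dist_eq, sub_zero, abs_of_pos hu0]
    exact hu.trans_le (min_le_left _ _)
  have hδ0 : 0 < δ := by linarith
  have hC : 0 < Real.cos u := lt_trans (by positivity) hc
  have hC2 : 2 < Real.cos u * δ := (div_lt_iff₀ hδ0).1 hc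
  have bd : ∀ x : ℝ, -1 ≤ x → x ≤ 1 → -2 * x / Real.cos u ∈ Set.Icc (-δ) δ := by
    intro x h1 h2
    constructor
    · rw [le_div_iff₀ hC]; linarith
    · rw [div_le_iff₀ hC]; linarith
  refine ⟨⟨⟨hu0.le, ?_⟩, bd _ (Real.neg_one_le_cos _) (Real.cos_le_one _)⟩,
    ⟨⟨?_, ?_⟩, bd _ (Real.neg_one_le_sin _) (Real.sin_le_one _)⟩, ?_⟩
  · show u ≤ 2 * π
    linarith
  · show 0 ≤ u + π
    linarith
  · show u + π ≤ 2 * π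
    linarith
  · intro hh
    have := congrArg Prod.fst hh
    simp only at this
    linarith
end

section
/- For every real u with cos u ≠ 0, r(2π−u, 2·cos(u/2)/cos u) = r(π−u, 2·sin(u/2)/cos u) = (−1, tan u, tan u). Moreover, if δ > 2 then there exists ε > 0 such that for all u with 0 < u < ε, the two parameter points (2π−u, 2·cos(u/2)/cos u) and (π−u, 2·sin(u/2)/cos u) are distinct points of D_δ. -/
open Real Set

theorem stmt6 :
    (∀ u : ℝ, Real.cos u ≠ 0 →
      mob (2 * π - u, 2 * Real.cos (u / 2) / Real.cos u)
          = mob (π - u, 2 * Real.sin (u / 2) / Real.cos u) ∧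
      mob (2 * π - u, 2 * Real.cos (u / 2) / Real.cos u)
          = ![-1, Real.tan u, Real.tan u]) ∧
    ∀ δ : ℝ, 2 < δ → ∃ ε > (0 : ℝ), ∀ u : ℝ, 0 < u → u < ε →
      (2 * π - u, 2 * Real.cos (u / 2) / Real.cos u)
        ∈ (Set.Icc (0 : ℝ) (2 * π)) ×ˢ (Set.Icc (-δ) δ) ∧
      (π - u, 2 * Real.sin (u / 2) / Real.cos u)
        ∈ (Set.Icc (0 : ℝ) (2 * π)) ×ˢ (Set.Icc (-δ) δ) ∧
      (2 * π - u, 2 * Real.cos (u / 2) / Real.cos u)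
        ≠ (π - u, 2 * Real.sin (u / 2) / Real.cos u) := by
  have key : ∀ u : ℝ, Real.cos u ≠ 0 →
      mob (2 * π - u, 2 * Real.cos (u / 2) / Real.cos u) = ![-1, Real.tan u, Real.tan u] ∧
      mob (π - u, 2 * Real.sin (u / 2) / Real.cos u) = ![-1, Real.tan u, Real.tan u] := by
    intro u hu
    have e1 : (2 * π - u) / 2 = π - u / 2 := by ring
    have e2 : (π - u) / 2 = π / 2 - u / 2 := by ring
    have hs : Real.sin u = 2 * Real.sin (u / 2) * Real.cos (u / 2) := by
      rw [← Real.sin_two_mul]; congr 1; ring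
    have hc : Real.cos u = 2 * Real.cos (u / 2) ^ 2 - 1 := by
      rw [← Real.cos_two_mul]; congr 1; ring
    have h1 := Real.sin_sq_add_cos_sq (u / 2)
    have a1 : 1 + 2 * Real.cos (u / 2) / Real.cos u * -Real.cos (u / 2) = -1 / Real.cos u := by
      field_simp
      linarith
    have a2 : 1 + 2 * Real.sin (u / 2) / Real.cos u * Real.sin (u / 2) = 1 / Real.cos u := by
      field_simp
      linarith
    have a3 : 2 * Real.cos (u / 2) / Real.cos u * Real.sin (u / 2) = Real.tan u := by
      rw [Real.tan_eq_sin_div_cos, hs]; ring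
    have a4 : 2 * Real.sin (u / 2) / Real.cos u * Real.cos (u / 2) = Real.tan u := by
      rw [Real.tan_eq_sin_div_cos, hs]; ring
    constructor
    · simp only [mob, e1, Real.cos_pi_sub, Real.sin_pi_sub, Real.cos_two_pi_sub,
        Real.sin_two_pi_sub, a1, a3]
      have b1 : -1 / Real.cos u * Real.cos u = -1 := by field_simp
      have b2 : -1 / Real.cos u * -Real.sin u = Real.tan u := by
        rw [Real.tan_eq_sin_div_cos]; ring
      rw [b1, b2]
    · simp only [mob, e2, Real.cos_pi_sub, Real.sin_pi_sub, Real.cos_pi_div_two_sub,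
        Real.sin_pi_div_two_sub, a2, a4]
      have b1 : 1 / Real.cos u * -Real.cos u = -1 := by field_simp
      have b2 : 1 / Real.cos u * Real.sin u = Real.tan u := by
        rw [Real.tan_eq_sin_div_cos]; ring
      rw [b1, b2]
  refine ⟨fun u hu => ⟨(key u hu).1.trans (key u hu).2.symm, (key u hu).1⟩, ?_⟩
  intro δ hδ
  have c1 : ContinuousAt (fun u : ℝ => 2 * Real.cos (u / 2) / Real.cos u) 0 :=
    ContinuousAt.div (by fun_prop) (by fun_prop) (by simp)
  have c2 : ContinuousAt (fun u : ℝ => 2 * Real.sin (u / 2) / Real.cos u) 0 :=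
    ContinuousAt.div (by fun_prop) (by fun_prop) (by simp)
  have m1 := c1.eventually_mem (Icc_mem_nhds (a := -δ) (b := δ) (by simp; linarith) (by simpa using hδ))
  have m2 := c2.eventually_mem (Icc_mem_nhds (a := -δ) (b := δ) (by simp; linarith) (by simp; linarith))
  obtain ⟨ε, hε, h⟩ := Metric.eventually_nhds_iff.1 (m1.and m2)
  refine ⟨min ε π, lt_min hε Real.pi_pos, fun u h0 hu => ?_⟩
  have hp := Real.pi_pos
  have hu1 := hu.trans_le (min_le_left _ _)
  have hu2 := hu.trans_le (min_le_right _ _)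
  obtain ⟨g1, g2⟩ := h (y := u) (by rw [Real.dist_eq, sub_zero, abs_of_pos h0]; exact hu1)
  refine ⟨⟨⟨?_, ?_⟩, g1⟩, ⟨⟨?_, ?_⟩, g2⟩, ?_⟩
  · show 0 ≤ 2 * π - u
    linarith
  · show 2 * π - u ≤ 2 * π
    linarith
  · show 0 ≤ π - u
    linarith
  · show π - u ≤ 2 * π
    linarith
  · intro he
    have := congrArg Prod.fst he
    simp only at this
    linarith
end

section
/- Let 0 < δ < 1 and let F(x,y,z) = (−y/(x²+y²), x/(x²+y²), 0). Then the line integral of F over the boundary curve of the Möbius strip, parametrized by u ↦ r(u,δ) for u ∈ [0,4π], equals 4π; that is, ∫_0^{4π} F(r(u,δ)) · (∂r/∂u)(u,δ) du = 4π. -/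
open Real Set

theorem stmt9 (δ : ℝ) (hδ0 : 0 < δ) (hδ1 : δ < 1)
    (F : (Fin 3 → ℝ) → (Fin 3 → ℝ))
    (hF : F = fun q => ![-q 1 / (q 0 ^ 2 + q 1 ^ 2), q 0 / (q 0 ^ 2 + q 1 ^ 2), 0]) :
    (∫ u in (0 : ℝ)..(4 * π), dot3 (F (mob (u, δ))) (pdu mob (u, δ))) = 4 * π := by
  have key : ∀ u : ℝ, dot3 (F (mob (u, δ))) (pdu mob (u, δ)) = 1 := by
    intro u
    have hd : DifferentiableAt ℝ mob (u, δ) := by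
      rw [differentiableAt_pi]
      intro i
      fin_cases i <;> simp [mob] <;> fun_prop
    have hc : HasDerivAt (fun t : ℝ => ((t, δ) : ℝ × ℝ)) (1, 0) u :=
      (hasDerivAt_id u).prodMk (hasDerivAt_const u δ)
    have h1 : HasDerivAt (fun t : ℝ => mob (t, δ)) (pdu mob (u, δ)) u :=
      HasFDerivAt.comp_hasDerivAt (f := fun t : ℝ => ((t, δ) : ℝ × ℝ)) (l := mob) u hd.hasFDerivAt hc
    have h2 := hasDerivAt_pi.1 h1
    have hw : HasDerivAt (fun t : ℝ => 1 + δ * Real.cos (t / 2))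
        (δ * (-Real.sin (u / 2) * (1 / 2))) u :=
      ((((hasDerivAt_id u).div_const 2).cos).const_mul δ).const_add 1
    have e0 : pdu mob (u, δ) 0 = _ :=
      (h2 0).unique (hw.mul (Real.hasDerivAt_cos u))
    have e1 : pdu mob (u, δ) 1 = _ :=
      (h2 1).unique (hw.mul (Real.hasDerivAt_sin u))
    have hpos : 0 < 1 + δ * Real.cos (u / 2) := by
      nlinarith [Real.neg_one_le_cos (u / 2)]
    have hs := Real.sin_sq_add_cos_sq u
    have hq : ((1 + δ * Real.cos (u / 2)) * Real.cos u) ^ 2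
        + ((1 + δ * Real.cos (u / 2)) * Real.sin u) ^ 2 = (1 + δ * Real.cos (u / 2)) ^ 2 := by
      linear_combination (1 + δ * Real.cos (u / 2)) ^ 2 * hs
    simp only [dot3, e0, e1, hF]
    simp only [mob, Matrix.cons_val_zero, Matrix.cons_val_one, Matrix.cons_val]
    rw [hq]
    generalize 1 + δ * Real.cos (u / 2) = w at *
    have hw0 : w ≠ 0 := hpos.ne'
    field_simp
    linear_combination 2 * w * hs
  simp [key]
end

section
/- Let 0 < δ < 1, let F(x,y,z) = (−y/(x²+y²), x/(x²+y²), 0), and set G = F ∘ r on a neighborhood of D_δ. Then ∮_{∂D_δ} (G · r_u) du + (G · r_v) dv = 0 and ∬_{D_δ} (G_u · r_v − G_v · r_u) du dv = 0. -/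
open Real Set

theorem pdu_eq (f : ℝ × ℝ → Fin 3 → ℝ) (u v : ℝ) (f' : Fin 3 → ℝ)
    (hf : DifferentiableAt ℝ f (u, v)) (h : HasDerivAt (fun t => f (t, v)) f' u) :
    pdu f (u, v) = f' := by
  have h1 : HasDerivAt (fun t : ℝ => (t, v)) ((1 : ℝ), (0 : ℝ)) u :=
    (hasDerivAt_id u).prodMk (hasDerivAt_const u v)
  exact (hf.hasFDerivAt.comp_hasDerivAt u h1).unique h

theorem pdv_eq (f : ℝ × ℝ → Fin 3 → ℝ) (u v : ℝ) (f' : Fin 3 → ℝ)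
    (hf : DifferentiableAt ℝ f (u, v)) (h : HasDerivAt (fun t => f (u, t)) f' v) :
    pdv f (u, v) = f' := by
  have h1 : HasDerivAt (fun t : ℝ => (u, t)) ((0 : ℝ), (1 : ℝ)) v :=
    (hasDerivAt_const v u).prodMk (hasDerivAt_id v)
  exact (hf.hasFDerivAt.comp_hasDerivAt v h1).unique h

theorem mob_diff (p : ℝ × ℝ) : DifferentiableAt ℝ mob p := by
  rw [differentiableAt_pi]
  intro i
  fin_cases i <;> simp [mob] <;> fun_prop

theorem hR (u v : ℝ) : HasDerivAt (fun t : ℝ => 1 + v * cos (t / 2)) (-(v * sin (u / 2) / 2)) u := by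
  have h := ((((hasDerivAt_id u).div_const 2).cos).const_mul v).const_add 1
  refine h.congr_deriv ?_
  simp; ring

theorem hRv (u v : ℝ) : HasDerivAt (fun t : ℝ => 1 + t * cos (u / 2)) (cos (u / 2)) v := by
  have h := ((hasDerivAt_id v).mul_const (cos (u / 2))).const_add 1
  exact h.congr_deriv (by simp)

theorem pdu_mob (u v : ℝ) : pdu mob (u, v) =
    ![-(v * sin (u / 2) / 2) * cos u + (1 + v * cos (u / 2)) * (-sin u),
      -(v * sin (u / 2) / 2) * sin u + (1 + v * cos (u / 2)) * cos u,
      v * cos (u / 2) / 2] := by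
  apply pdu_eq _ _ _ _ (mob_diff _)
  rw [hasDerivAt_pi]
  intro i
  fin_cases i
  · exact (hR u v).mul (hasDerivAt_cos u)
  · exact (hR u v).mul (hasDerivAt_sin u)
  · have h := (((hasDerivAt_id u).div_const 2).sin).const_mul v
    refine h.congr_deriv ?_
    simp; ring

theorem pdv_mob (u v : ℝ) : pdv mob (u, v) =
    ![cos (u / 2) * cos u, cos (u / 2) * sin u, sin (u / 2)] := by
  apply pdv_eq _ _ _ _ (mob_diff _)
  rw [hasDerivAt_pi]
  intro i
  fin_cases i
  · exact (hRv u v).mul_const (cos u)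
  · exact (hRv u v).mul_const (sin u)
  · exact ((hasDerivAt_id v).mul_const (sin (u / 2))).congr_deriv (by simp)

noncomputable def Gs (p : ℝ × ℝ) : Fin 3 → ℝ :=
  ![-sin p.1 / (1 + p.2 * cos (p.1 / 2)), cos p.1 / (1 + p.2 * cos (p.1 / 2)), 0]

theorem G_eq : (fun q : Fin 3 → ℝ => ![-q 1 / (q 0 ^ 2 + q 1 ^ 2), q 0 / (q 0 ^ 2 + q 1 ^ 2), 0]) ∘ mob
    = Gs := by
  funext p
  have h : ((1 + p.2 * cos (p.1 / 2)) * cos p.1) ^ 2 + ((1 + p.2 * cos (p.1 / 2)) * sin p.1) ^ 2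
      = (1 + p.2 * cos (p.1 / 2)) ^ 2 := by
    linear_combination (1 + p.2 * cos (p.1 / 2)) ^ 2 * sin_sq_add_cos_sq p.1
  by_cases h0 : 1 + p.2 * cos (p.1 / 2) = 0
  · ext i
    fin_cases i <;> simp [mob, Gs, h0]
  · ext i
    fin_cases i <;> simp [mob, Gs, h] <;> field_simp

theorem Gs_diff (p : ℝ × ℝ) (h0 : 1 + p.2 * cos (p.1 / 2) ≠ 0) : DifferentiableAt ℝ Gs p := by
  rw [differentiableAt_pi]
  intro i
  fin_cases i <;> simp [Gs] <;> fun_prop (disch := assumption)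

theorem pdu_Gs (u v : ℝ) (h0 : 1 + v * cos (u / 2) ≠ 0) : pdu Gs (u, v) =
    ![(-cos u * (1 + v * cos (u / 2)) - (-sin u) * -(v * sin (u / 2) / 2)) / (1 + v * cos (u / 2)) ^ 2,
      (-sin u * (1 + v * cos (u / 2)) - cos u * -(v * sin (u / 2) / 2)) / (1 + v * cos (u / 2)) ^ 2,
      0] := by
  apply pdu_eq _ _ _ _ (Gs_diff _ h0)
  rw [hasDerivAt_pi]
  intro i
  fin_cases i
  · exact (hasDerivAt_sin u).neg.div (hR u v) h0
  · exact (hasDerivAt_cos u).div (hR u v) h0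
  · exact hasDerivAt_const _ _

theorem pdv_Gs (u v : ℝ) (h0 : 1 + v * cos (u / 2) ≠ 0) : pdv Gs (u, v) =
    ![(0 * (1 + v * cos (u / 2)) - (-sin u) * cos (u / 2)) / (1 + v * cos (u / 2)) ^ 2,
      (0 * (1 + v * cos (u / 2)) - cos u * cos (u / 2)) / (1 + v * cos (u / 2)) ^ 2,
      0] := by
  apply pdv_eq _ _ _ _ (Gs_diff _ h0)
  rw [hasDerivAt_pi]
  intro i
  fin_cases i
  · exact (hasDerivAt_const v (-sin u)).div (hRv u v) h0
  · exact (hasDerivAt_const v (cos u)).div (hRv u v) h0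
  · exact hasDerivAt_const _ _

theorem R_ne (δ u v : ℝ) (hδ1 : δ < 1) (h1 : -δ ≤ v) (h2 : v ≤ δ) : 1 + v * cos (u / 2) ≠ 0 := by
  have h : |v * cos (u / 2)| < 1 := by
    rw [abs_mul]
    have := abs_cos_le_one (u / 2)
    have hv : |v| ≤ δ := abs_le.2 ⟨h1, h2⟩
    nlinarith [abs_nonneg v, abs_nonneg (cos (u / 2))]
  have := (abs_lt.1 h).1
  linarith

theorem dot_u (u v : ℝ) (h0 : 1 + v * cos (u / 2) ≠ 0) : dot3 (Gs (u, v)) (pdu mob (u, v)) = 1 := by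
  rw [pdu_mob]
  simp [dot3, Gs]
  field_simp
  linear_combination (1 + v * cos (u / 2)) * 2 * sin_sq_add_cos_sq u

theorem dot_v (u v : ℝ) : dot3 (Gs (u, v)) (pdv mob (u, v)) = 0 := by
  rw [pdv_mob]
  simp [dot3, Gs]
  ring

theorem dot_uv (u v : ℝ) (h0 : 1 + v * cos (u / 2) ≠ 0) :
    dot3 (pdu Gs (u, v)) (pdv mob (u, v)) - dot3 (pdv Gs (u, v)) (pdu mob (u, v)) = 0 := by
  rw [pdv_mob, pdu_mob, pdu_Gs _ _ h0, pdv_Gs _ _ h0]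
  simp [dot3]
  field_simp
  ring

theorem stmt11 (δ : ℝ) (hδ0 : 0 < δ) (hδ1 : δ < 1)
    (F : (Fin 3 → ℝ) → (Fin 3 → ℝ))
    (hF : F = fun q => ![-q 1 / (q 0 ^ 2 + q 1 ^ 2), q 0 / (q 0 ^ 2 + q 1 ^ 2), 0])
    (G : ℝ × ℝ → Fin 3 → ℝ) (hG : G = F ∘ mob) :
    lineInt (fun p => dot3 (G p) (pdu mob p)) (fun p => dot3 (G p) (pdv mob p))
        0 (2 * π) (-δ) δ = 0 ∧
    (∫ p in (Set.Icc (0 : ℝ) (2 * π)) ×ˢ (Set.Icc (-δ) δ),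
        (dot3 (pdu G p) (pdv mob p) - dot3 (pdv G p) (pdu mob p))) = 0 := by
  have hGs : G = Gs := by rw [hG, hF, G_eq]
  subst hGs
  constructor
  · have ha : ∀ u, dot3 (Gs (u, -δ)) (pdu mob (u, -δ)) = 1 := fun u =>
      dot_u u _ (R_ne δ u _ hδ1 le_rfl (by linarith))
    have hb : ∀ u, dot3 (Gs (u, δ)) (pdu mob (u, δ)) = 1 := fun u =>
      dot_u u _ (R_ne δ u _ hδ1 (by linarith) le_rfl)
    simp only [lineInt, ha, hb, dot_v]
    simp
  · apply MeasureTheory.setIntegral_eq_zero_of_forall_eq_zero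
    rintro ⟨u, v⟩ ⟨-, h1, h2⟩
    exact dot_uv u v (R_ne δ u v hδ1 h1 h2)
end

section
/- Let δ > 0. For every (u,t) ∈ ℝ², the first coordinate of the cross product r̂_u(u,t) × r̂_t(u,t) equals δ·cos(u/2)·sin u and the second coordinate equals −δ²·cos²(u/2)·cos u. Consequently, for every (u,t) in the open rectangle (−π,π) × (0,1), r̂_u(u,t) × r̂_t(u,t) ≠ (0,0,0). -/
open Real Set

theorem rhat_eq (δ : ℝ) : rhat δ = fun p => ![Real.cos p.1 * (1 + δ * Real.cos (p.1 / 2) * (1 - 2 * p.2)),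
    Real.sin p.1 * (1 - 2 * p.2 + δ * Real.cos (p.1 / 2)), δ * Real.sin (p.1 / 2)] := by
  funext p
  have h : (2 * π - p.1) / 2 = π - p.1 / 2 := by ring
  ext i
  fin_cases i <;>
    simp [rhat, mob, h, Real.cos_pi_sub, Real.sin_pi_sub, Real.cos_two_pi_sub, Real.sin_two_pi_sub] <;> ring

theorem rhat_diff (δ : ℝ) : Differentiable ℝ (rhat δ) := by
  rw [rhat_eq, differentiable_pi]
  intro i
  fin_cases i <;> simp <;> fun_prop

theorem pdu2 (δ u t : ℝ) : pdu (rhat δ) (u, t) 2 = δ * Real.cos (u / 2) / 2 := by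
  have h1 : HasDerivAt (fun x : ℝ => (x, t)) ((1 : ℝ), (0 : ℝ)) u :=
    (hasDerivAt_id u).prodMk (hasDerivAt_const u t)
  have h2 := (rhat_diff δ (u, t)).hasFDerivAt.comp_hasDerivAt u h1
  have h3 := (hasDerivAt_pi.1 h2) 2
  have h4 : HasDerivAt (fun x : ℝ => δ * Real.sin (x / 2)) (δ * (Real.cos (u / 2) * (1 / 2))) u :=
    (((hasDerivAt_id u).div_const 2).sin).const_mul δ
  have h5 : (fun x : ℝ => (rhat δ ∘ fun x : ℝ => (x, t)) x 2) = fun x : ℝ => δ * Real.sin (x / 2) := by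
    funext x; simp [rhat_eq]
  rw [h5] at h3
  have := h3.unique h4
  unfold pdu
  rw [this]; ring

theorem pdv_eq_s13 (δ u t : ℝ) : pdv (rhat δ) (u, t) =
    ![-2 * δ * Real.cos (u / 2) * Real.cos u, -2 * Real.sin u, 0] := by
  have h1 : HasDerivAt (fun x : ℝ => (u, x)) ((0 : ℝ), (1 : ℝ)) t :=
    (hasDerivAt_const t u).prodMk (hasDerivAt_id t)
  have h2 := (rhat_diff δ (u, t)).hasFDerivAt.comp_hasDerivAt t h1
  refine h2.unique ?_
  rw [hasDerivAt_pi]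
  have hl : HasDerivAt (fun x : ℝ => 1 - 2 * x) (-(2 * 1)) t :=
    ((hasDerivAt_id t).const_mul 2).const_sub 1
  intro i
  fin_cases i
  · simp only [rhat_eq, Function.comp]
    refine HasDerivAt.congr_deriv (f' := Real.cos u * (δ * Real.cos (u / 2) * -(2 * 1))) ?_ (by simp; ring)
    exact ((hl.const_mul (δ * Real.cos (u / 2))).const_add 1).const_mul (Real.cos u)
  · simp only [rhat_eq, Function.comp]
    refine HasDerivAt.congr_deriv (f' := Real.sin u * -(2 * 1)) ?_ (by simp; ring)
    exact (hl.add_const (δ * Real.cos (u / 2))).const_mul (Real.sin u)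
  · simp only [rhat_eq, Function.comp]
    simp
    exact hasDerivAt_const _ _

theorem stmt13 (δ : ℝ) (hδ : 0 < δ) :
    (∀ u t : ℝ,
      cross3 (pdu (rhat δ) (u, t)) (pdv (rhat δ) (u, t)) 0
          = δ * Real.cos (u / 2) * Real.sin u ∧
      cross3 (pdu (rhat δ) (u, t)) (pdv (rhat δ) (u, t)) 1
          = -δ ^ 2 * Real.cos (u / 2) ^ 2 * Real.cos u) ∧
    ∀ p ∈ (Set.Ioo (-π) π) ×ˢ (Set.Ioo (0 : ℝ) 1),
      cross3 (pdu (rhat δ) p) (pdv (rhat δ) p) ≠ ![0, 0, 0] := by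
  have key : ∀ u t : ℝ,
      cross3 (pdu (rhat δ) (u, t)) (pdv (rhat δ) (u, t)) 0
          = δ * Real.cos (u / 2) * Real.sin u ∧
      cross3 (pdu (rhat δ) (u, t)) (pdv (rhat δ) (u, t)) 1
          = -δ ^ 2 * Real.cos (u / 2) ^ 2 * Real.cos u := by
    intro u t
    constructor
    · simp [cross3, pdv_eq_s13, pdu2]; ring
    · simp [cross3, pdv_eq_s13, pdu2]; ring
  refine ⟨key, ?_⟩
  rintro ⟨u, t⟩ ⟨⟨hu1, hu2⟩, -⟩ h0
  obtain ⟨h1, h2⟩ := key u t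
  rw [h0] at h1 h2
  simp only [Matrix.cons_val_zero, Matrix.cons_val_one] at h1 h2
  have hc : 0 < Real.cos (u / 2) := by
    apply Real.cos_pos_of_mem_Ioo
    constructor <;> simp only at hu1 hu2 <;> linarith
  have hs : Real.sin u = 0 := by
    rcases mul_eq_zero.1 h1.symm with h | h
    · exact absurd h (by positivity)
    · exact h
  have hcu : Real.cos u = 0 := by
    rcases mul_eq_zero.1 h2.symm with h | h
    · have : 0 < δ ^ 2 * Real.cos (u / 2) ^ 2 := by positivity
      linarith
    · exact h
  have := Real.sin_sq_add_cos_sq u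
  rw [hs, hcu] at this
  norm_num at this
end

section
/- Let δ > 0. Then the image under r̂ of the boundary of the rectangle D̂ = [−π,π] × [0,1] equals the boundary curve of the Möbius strip: r̂(∂D̂) = {r(u,δ) : u ∈ [−π, 3π]}. -/
open Real Set

theorem stmt14 (δ : ℝ) (hδ : 0 < δ) :
    rhat δ '' frontier ((Set.Icc (-π) π) ×ˢ (Set.Icc (0 : ℝ) 1))
      = (fun u : ℝ => mob (u, δ)) '' Set.Icc (-π) (3 * π) := by
  have hpi := Real.pi_pos
  have hper : mob (2 * π - -π, δ) = mob (-π, δ) := by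
    have e1 : (2 * π - -π) / 2 = (-π) / 2 + 2 * π := by ring
    have e2 : (2 * π - -π) = -π + 2 * π + 2 * π := by ring
    simp only [mob]
    rw [e1, e2]
    simp only [Real.cos_add_two_pi, Real.sin_add_two_pi]
  have hπ : 2 * π - π = π := by ring
  have hfr : frontier ((Set.Icc (-π) π) ×ˢ (Set.Icc (0 : ℝ) 1))
      = Set.Icc (-π) π ×ˢ {0, 1} ∪ {-π, π} ×ˢ Set.Icc (0 : ℝ) 1 := by
    rw [frontier_prod_eq, frontier_Icc (show -π ≤ π by linarith), frontier_Icc (zero_le_one (α := ℝ)),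
      closure_Icc, closure_Icc]
  rw [hfr]
  ext x
  constructor
  · rintro ⟨⟨u, t⟩, h, rfl⟩
    rcases h with ⟨⟨h1, h2⟩, h⟩ | ⟨h, -⟩
    · rcases h with h | h
      · change t = 0 at h
        subst h
        exact ⟨u, ⟨h1, by simp only at h2; linarith⟩, by simp [rhat]⟩
      · change t = 1 at h
        subst h
        simp only at h1 h2
        exact ⟨2 * π - u, ⟨by linarith, by linarith⟩, by simp [rhat]⟩
    · rcases h with h | h
      · change u = -π at h
        subst h
        refine ⟨-π, ⟨le_refl _, by linarith⟩, ?_⟩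
        simp only [rhat]
        rw [hper, ← add_smul]
        simp
      · change u = π at h
        subst h
        refine ⟨π, ⟨by linarith, by linarith⟩, ?_⟩
        simp only [rhat]
        rw [hπ, ← add_smul]
        simp
  · rintro ⟨u, ⟨h1, h2⟩, rfl⟩
    by_cases h : u ≤ π
    · exact ⟨(u, 0), Or.inl ⟨⟨h1, h⟩, by simp⟩, by simp [rhat]⟩
    · push Not at h
      exact ⟨(2 * π - u, 1), Or.inl ⟨⟨by simp only; linarith, by simp only; linarith⟩, by simp⟩,
        by simp [rhat]⟩
end

section
/- Let 0 < δ < 1. Then for every point p ∈ r̂(∂D̂) (the boundary curve of the Möbius strip), the first two coordinates of p are not both zero; that is, the curve r̂(∂D̂) does not intersect the z-axis. -/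
open Real Set

theorem stmt18 (δ : ℝ) (hδ0 : 0 < δ) (hδ1 : δ < 1) :
    ∀ p ∈ rhat δ '' frontier ((Set.Icc (-π) π) ×ˢ (Set.Icc (0 : ℝ) 1)),
      ¬(p 0 = 0 ∧ p 1 = 0) := by
  rintro p ⟨⟨u, t⟩, h, rfl⟩ ⟨h0, h1⟩
  have hc : ∀ x : ℝ, 0 < 1 + δ * Real.cos x := by
    intro x
    nlinarith [Real.neg_one_le_cos x]
  have hmob : ∀ w : ℝ, mob (w, δ) 0 = 0 → mob (w, δ) 1 = 0 → False := by
    intro w a b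
    simp only [mob, Matrix.cons_val_zero, Matrix.cons_val_one] at a b
    have a' := (mul_eq_zero.mp a).resolve_left (hc _).ne'
    have b' := (mul_eq_zero.mp b).resolve_left (hc _).ne'
    have := Real.sin_sq_add_cos_sq w
    rw [a', b'] at this
    norm_num at this
  have hpi : -π < π := by linarith [Real.pi_pos]
  rw [frontier_prod_eq, frontier_Icc zero_lt_one.le, frontier_Icc hpi.le] at h
  have hcu : Real.cos (2 * π - u) = Real.cos u := Real.cos_two_pi_sub u
  have hcu2 : Real.cos ((2 * π - u) / 2) = -Real.cos (u / 2) := by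
    rw [show (2 * π - u) / 2 = π - u / 2 by ring, Real.cos_pi_sub]
  rcases h with ⟨_, ht⟩ | ⟨hu, _⟩
  · simp only [mem_insert_iff, mem_singleton_iff] at ht
    rcases ht with rfl | rfl
    · exact hmob u (by simpa [rhat] using h0) (by simpa [rhat] using h1)
    · exact hmob (2 * π - u) (by simpa [rhat] using h0) (by simpa [rhat] using h1)
  · simp only [mem_insert_iff, mem_singleton_iff] at hu
    have e1 : Real.cos u = -1 := by rcases hu with rfl | rfl <;> simp
    have e2 : Real.cos (u / 2) = 0 := by
      rcases hu with rfl | rfl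
      · rw [neg_div, Real.cos_neg, Real.cos_pi_div_two]
      · exact Real.cos_pi_div_two
    simp only [rhat, mob, Pi.add_apply, Pi.smul_apply, smul_eq_mul, Matrix.cons_val_zero,
      hcu, hcu2, e1, e2] at h0
    linarith
end
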